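/- (Theorem 1, disturbance-free case.) Let N ≥ 1, h > 0, κ > 1, let M, D₂, LC̄₃, LD₄, LD₅ be real N×N matrices, and let P, Q be real symmetric positive definite N×N matrices with MᵀP + PM = −Q. Define c₈ = √(κ·λ_max(P)/λ_min(P)) and c₉ = λ_min(Q) − ‖2PLC̄₃‖·c₈ − ( ‖2PD₂‖ + ‖PLD₅‖ + (‖2PD₂‖ + ‖2PLD₄‖)·c₈ + ‖PLD₅‖·c₈ )/h, and assume c₉ > 0. Let e : ℝ → ℝ^N be differentiable and satisfy, for all t ≥ 0, e'(t) = M·e(t) + (1/h)·D₂·(e(t) − e(t−h)) + LC̄₃·e(t−h) + (1/h)·LD₄·e(t−h) − (1/(2h))·LD₅·(e(t) + e(t−2h)), together with the Razumikhin condition e(t+θ)ᵀP e(t+θ) ≤ κ·e(t)ᵀP e(t) for all t ≥ 0 and all θ ∈ [−2h, 0]. Then for every t ≥ 0, ‖e(t)‖ ≤ √(λ_max(P)/λ_min(P)) · ‖e(0)‖ · exp( −c₉·t / (2·λ_max(P)) ). -/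

import Mathlib

open Matrix

/-- The operator norm of a square real matrix induced by the Euclidean norm. -/
noncomputable def l2OpNorm {N : ℕ} (M : Matrix (Fin N) (Fin N) ℝ) : ℝ :=
  ‖Matrix.toEuclideanCLM (𝕜 := ℝ) M‖


lemma aux_quad {N : ℕ} (X : Matrix (Fin N) (Fin N) ℝ) (x y : EuclideanSpace ℝ (Fin N)) :
    inner ℝ x (Matrix.toEuclideanLin X y) = x ⬝ᵥ (X *ᵥ y) := by
  rw [EuclideanSpace.inner_eq_star_dotProduct]
  simp [Matrix.toLpLin_apply, dotProduct_comm]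

lemma aux_bound {N : ℕ} (X : Matrix (Fin N) (Fin N) ℝ) (x y : EuclideanSpace ℝ (Fin N)) :
    |inner ℝ x (Matrix.toEuclideanLin X y)| ≤ l2OpNorm X * ‖x‖ * ‖y‖ := by
  have h1 := abs_real_inner_le_norm x (Matrix.toEuclideanLin X y)
  have h2 : ‖Matrix.toEuclideanLin X y‖ ≤ l2OpNorm X * ‖y‖ :=
    (Matrix.toEuclideanCLM (𝕜 := ℝ) X).le_opNorm y
  have h3 := mul_le_mul_of_nonneg_left h2 (norm_nonneg x)
  linarith

lemma aux_spec {N : ℕ} {X : Matrix (Fin N) (Fin N) ℝ} (hX : X.IsHermitian)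
    (x : EuclideanSpace ℝ (Fin N)) :
    inner ℝ x (Matrix.toEuclideanLin X x)
      = ∑ i, hX.eigenvalues i * (inner ℝ x (hX.eigenvectorBasis i)) ^ 2 := by
  rw [← hX.eigenvectorBasis.sum_inner_mul_inner x (Matrix.toEuclideanLin X x)]
  refine Finset.sum_congr rfl fun i _ => ?_
  have hs := (Matrix.isSymmetric_toEuclideanLin_iff.2 hX) (hX.eigenvectorBasis i) x
  have he : Matrix.toEuclideanLin X (hX.eigenvectorBasis i)
      = hX.eigenvalues i • hX.eigenvectorBasis i := by
    have := hX.mulVec_eigenvectorBasis i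
    apply WithLp.ofLp_injective
    simpa [Matrix.toLpLin_apply] using this
  rw [← hs, he, real_inner_smul_left, real_inner_comm x]
  ring

lemma aux_lower {N : ℕ} {X : Matrix (Fin N) (Fin N) ℝ} (hX : X.IsHermitian)
    (x : EuclideanSpace ℝ (Fin N)) :
    (⨅ i, hX.eigenvalues i) * ‖x‖ ^ 2 ≤ inner ℝ x (Matrix.toEuclideanLin X x) := by
  rw [aux_spec hX, ← hX.eigenvectorBasis.sum_sq_inner_left x, Finset.mul_sum]
  refine Finset.sum_le_sum fun i _ => ?_
  exact mul_le_mul_of_nonneg_right (ciInf_le (Set.finite_range _).bddBelow i) (sq_nonneg _)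

lemma aux_upper {N : ℕ} {X : Matrix (Fin N) (Fin N) ℝ} (hX : X.IsHermitian)
    (x : EuclideanSpace ℝ (Fin N)) :
    inner ℝ x (Matrix.toEuclideanLin X x) ≤ (⨆ i, hX.eigenvalues i) * ‖x‖ ^ 2 := by
  rw [aux_spec hX, ← hX.eigenvectorBasis.sum_sq_inner_left x, Finset.mul_sum]
  refine Finset.sum_le_sum fun i _ => ?_
  exact mul_le_mul_of_nonneg_right (le_ciSup (Set.finite_range _).bddAbove i) (sq_nonneg _)

lemma aux_lyap {N : ℕ} {M P Q : Matrix (Fin N) (Fin N) ℝ} (hP : P.IsSymm)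
    (hL : Mᵀ * P + P * M = -Q) (x : EuclideanSpace ℝ (Fin N)) :
    2 * inner ℝ x (Matrix.toEuclideanLin (P * M) x)
      = - inner ℝ x (Matrix.toEuclideanLin Q x) := by
  rw [aux_quad, aux_quad]
  have h1 : (x : Fin N → ℝ) ⬝ᵥ ((Mᵀ * P) *ᵥ x) = x ⬝ᵥ ((P * M) *ᵥ x) := by
    have : Mᵀ * P = (P * M)ᵀ := by rw [Matrix.transpose_mul, hP.eq]
    rw [this, Matrix.mulVec_transpose, dotProduct_comm, Matrix.dotProduct_mulVec]
  have h2 := congrArg (fun Y : Matrix (Fin N) (Fin N) ℝ => (x : Fin N → ℝ) ⬝ᵥ (Y *ᵥ x)) hL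
  simp only [Matrix.add_mulVec, dotProduct_add, Matrix.neg_mulVec, dotProduct_neg] at h2
  linarith

lemma aux_mul {N : ℕ} (X Y : Matrix (Fin N) (Fin N) ℝ) (x : EuclideanSpace ℝ (Fin N)) :
    Matrix.toEuclideanLin X (Matrix.toEuclideanLin Y x) = Matrix.toEuclideanLin (X * Y) x := by
  simp [Matrix.toLpLin_apply]

/-- Theorem 1 (disturbance-free case): under the Lyapunov equation `MᵀP + PM = -Q`, the
Razumikhin condition and positivity of the dissipation rate `c₉`, the delayed observer
error decays exponentially. -/
theorem delayed_observer_exponential_convergence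
    (N : ℕ) (hN : 1 ≤ N) (h : ℝ) (hh : 0 < h) (κ : ℝ) (hκ : 1 < κ)
    (M D2 LC3 LD4 LD5 P Q : Matrix (Fin N) (Fin N) ℝ)
    (hPsymm : P.IsSymm) (hQsymm : Q.IsSymm)
    (hP : P.PosDef) (hQ : Q.PosDef)
    (hLyap : Mᵀ * P + P * M = -Q)
    (lminP lmaxP lminQ c₈ c₉ : ℝ)
    (hlminP : lminP = ⨅ i, hP.1.eigenvalues i)
    (hlmaxP : lmaxP = ⨆ i, hP.1.eigenvalues i)
    (hlminQ : lminQ = ⨅ i, hQ.1.eigenvalues i)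
    (hc₈ : c₈ = Real.sqrt (κ * lmaxP / lminP))
    (hc₉ : c₉ = lminQ - l2OpNorm ((2 : ℝ) • (P * LC3)) * c₈
      - (l2OpNorm ((2 : ℝ) • (P * D2)) + l2OpNorm (P * LD5)
          + (l2OpNorm ((2 : ℝ) • (P * D2)) + l2OpNorm ((2 : ℝ) • (P * LD4))) * c₈
          + l2OpNorm (P * LD5) * c₈) / h)
    (hc₉pos : 0 < c₉)
    (e : ℝ → EuclideanSpace ℝ (Fin N)) (he : Differentiable ℝ e)
    (hode : ∀ t : ℝ, 0 ≤ t →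
      deriv e t = Matrix.toEuclideanLin M (e t)
        + (1 / h) • Matrix.toEuclideanLin D2 (e t - e (t - h))
        + Matrix.toEuclideanLin LC3 (e (t - h))
        + (1 / h) • Matrix.toEuclideanLin LD4 (e (t - h))
        - (1 / (2 * h)) • Matrix.toEuclideanLin LD5 (e t + e (t - 2 * h)))
    (hRazumikhin : ∀ t : ℝ, 0 ≤ t → ∀ θ ∈ Set.Icc (-(2 * h)) (0 : ℝ),
      e (t + θ) ⬝ᵥ (P *ᵥ e (t + θ)) ≤ κ * (e t ⬝ᵥ (P *ᵥ e t))) :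
    ∀ t : ℝ, 0 ≤ t →
      ‖e t‖ ≤ Real.sqrt (lmaxP / lminP) * ‖e 0‖ * Real.exp (-c₉ * t / (2 * lmaxP)) := by
  have hne : Nonempty (Fin N) := ⟨⟨0, hN⟩⟩
  have hlo : ∀ x, lminP * ‖x‖ ^ 2 ≤ inner ℝ x (Matrix.toEuclideanLin P x) := by
    rw [hlminP]; exact aux_lower hP.1
  have hup : ∀ x, inner ℝ x (Matrix.toEuclideanLin P x) ≤ lmaxP * ‖x‖ ^ 2 := by
    rw [hlmaxP]; exact aux_upper hP.1
  have hloQ : ∀ x, lminQ * ‖x‖ ^ 2 ≤ inner ℝ x (Matrix.toEuclideanLin Q x) := by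
    rw [hlminQ]; exact aux_lower hQ.1
  have hmin : 0 < lminP := by
    obtain ⟨i, hi⟩ := exists_eq_ciInf_of_finite (f := hP.1.eigenvalues)
    rw [hlminP, ← hi]
    exact hP.eigenvalues_pos i
  have hmax : 0 < lmaxP := by
    refine lt_of_lt_of_le hmin ?_
    rw [hlminP, hlmaxP]
    exact (ciInf_le (Set.finite_range _).bddBelow hne.some).trans
      (le_ciSup (Set.finite_range _).bddAbove hne.some)
  have hκ0 : 0 < κ := by linarith
  -- delayed norm bound
  have hdel : ∀ t : ℝ, 0 ≤ t → ∀ s : ℝ, 0 ≤ s → s ≤ 2 * h → ‖e (t - s)‖ ≤ c₈ * ‖e t‖ := by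
    intro t ht s hs hs2
    have h1 := hRazumikhin t ht (-s) ⟨by linarith, by linarith⟩
    rw [← aux_quad, ← aux_quad, ← sub_eq_add_neg] at h1
    have h2 := hlo (e (t - s))
    have h3 := mul_le_mul_of_nonneg_left (hup (e t)) hκ0.le
    have h4 : ‖e (t - s)‖ ^ 2 ≤ (c₈ * ‖e t‖) ^ 2 := by
      rw [mul_pow, hc₈, Real.sq_sqrt (by positivity), div_mul_eq_mul_div, le_div_iff₀ hmin]
      linarith
    exact (sq_le_sq₀ (norm_nonneg _) (by rw [hc₈]; positivity)).1 h4
  have hsymm : ∀ x y, inner ℝ (Matrix.toEuclideanLin P x) y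
      = inner ℝ x (Matrix.toEuclideanLin P y) :=
    fun x y => (Matrix.isSymmetric_toEuclideanLin_iff.2 hP.1) x y
  set V : ℝ → ℝ := fun t => inner ℝ (e t) (Matrix.toEuclideanLin P (e t)) with hV
  have hVd : ∀ t, HasDerivAt V (2 * inner ℝ (e t) (Matrix.toEuclideanLin P (deriv e t))) t := by
    intro t
    have h1 := (he t).hasDerivAt
    have h2 : HasDerivAt (fun t => Matrix.toEuclideanLin P (e t))
        (Matrix.toEuclideanLin P (deriv e t)) t :=
      (Matrix.toEuclideanCLM (𝕜 := ℝ) P).hasFDerivAt.comp_hasDerivAt t h1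
    have h3 := h1.inner ℝ h2
    have h4 : 2 * inner ℝ (e t) (Matrix.toEuclideanLin P (deriv e t))
        = inner ℝ (e t) (Matrix.toEuclideanLin P (deriv e t))
          + inner ℝ (deriv e t) (Matrix.toEuclideanLin P (e t)) := by
      rw [← hsymm (deriv e t), real_inner_comm (e t)]
      ring
    rw [h4]
    exact h3
  have hbd : ∀ t, 0 ≤ t → 2 * inner ℝ (e t) (Matrix.toEuclideanLin P (deriv e t))
      ≤ -c₉ * ‖e t‖ ^ 2 := by
    intro t ht
    have hh1 := hdel t ht h hh.le (by linarith)
    have hh2 := hdel t ht (2 * h) (by linarith) le_rfl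
    rw [hode t ht]
    generalize e (t - h) = y at *
    generalize e (t - 2 * h) = z at *
    generalize e t = x at *
    have hx := norm_nonneg x
    have key : ∀ (X : Matrix (Fin N) (Fin N) ℝ) (w : EuclideanSpace ℝ (Fin N)) (c : ℝ),
        ‖w‖ ≤ c * ‖x‖ → |inner ℝ x (Matrix.toEuclideanLin X w)| ≤ l2OpNorm X * c * ‖x‖ ^ 2 := by
      intro X w c hw
      have h0 : 0 ≤ l2OpNorm X := norm_nonneg _
      calc _ ≤ l2OpNorm X * ‖x‖ * ‖w‖ := aux_bound X x w
        _ ≤ l2OpNorm X * ‖x‖ * (c * ‖x‖) := by gcongr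
        _ = _ := by ring
    have b1 := (abs_le.1 (key ((2 : ℝ) • (P * D2)) x 1 (by simp))).2
    have b2 := (abs_le.1 (key ((2 : ℝ) • (P * D2)) y c₈ hh1)).1
    have b3 := (abs_le.1 (key ((2 : ℝ) • (P * LC3)) y c₈ hh1)).2
    have b4 := (abs_le.1 (key ((2 : ℝ) • (P * LD4)) y c₈ hh1)).2
    have b5 := (abs_le.1 (key (P * LD5) x 1 (by simp))).1
    have b6 := (abs_le.1 (key (P * LD5) z c₈ hh2)).1
    have b7 := hloQ x
    have b8 := aux_lyap hPsymm hLyap x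
    simp only [map_add, map_sub, map_smul, inner_add_right, inner_sub_right, inner_smul_right,
      aux_mul, LinearMap.smul_apply] at b1 b2 b3 b4 ⊢
    have hi : 0 < 1 / h := by positivity
    have e2 : 1 / (2 * h) = (1 / h) / 2 := by field_simp
    rw [hc₉, e2]
    simp only [div_eq_mul_inv _ h, one_mul] at hi ⊢
    generalize h⁻¹ = r at *
    have b9 := mul_le_mul_of_nonneg_left
      (add_le_add (add_le_add b1 b4) (add_le_add (add_le_add (neg_le_neg b2) (neg_le_neg b5))
        (neg_le_neg b6))) hi.le
    linarith
  have hVle : ∀ t, 0 ≤ t → V t ≤ V 0 * Real.exp (-(c₉ / lmaxP) * t) := by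
    have hd : ∀ t, HasDerivAt (fun t => V t * Real.exp ((c₉ / lmaxP) * t))
        (2 * inner ℝ (e t) (Matrix.toEuclideanLin P (deriv e t)) * Real.exp ((c₉ / lmaxP) * t)
          + V t * (Real.exp ((c₉ / lmaxP) * t) * (c₉ / lmaxP))) t := by
      intro t
      have := ((hasDerivAt_id t).const_mul (c₉ / lmaxP)).exp
      simp only [id, mul_one] at this
      exact (hVd t).mul this
    have hanti : AntitoneOn (fun t => V t * Real.exp ((c₉ / lmaxP) * t)) (Set.Ici 0) := by
      refine antitoneOn_of_deriv_nonpos (convex_Ici 0)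
        (fun t _ => (hd t).continuousAt.continuousWithinAt)
        (fun t _ => (hd t).differentiableAt.differentiableWithinAt) ?_
      intro t ht
      rw [interior_Ici] at ht
      rw [(hd t).deriv]
      have h1 := hbd t (le_of_lt ht)
      have h2 : (c₉ / lmaxP) * V t ≤ c₉ * ‖e t‖ ^ 2 := by
        have := mul_le_mul_of_nonneg_left (hup (e t)) (div_pos hc₉pos hmax).le
        rwa [← mul_assoc, div_mul_cancel₀ _ hmax.ne'] at this
      have h3 := mul_le_mul_of_nonneg_right (add_le_add h1 h2)
        (Real.exp_pos ((c₉ / lmaxP) * t)).le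
      linarith
    intro t ht
    have := hanti (Set.mem_Ici.2 le_rfl) (Set.mem_Ici.2 ht) ht
    simp only [mul_zero, Real.exp_zero, mul_one] at this
    rw [neg_mul, Real.exp_neg, ← div_eq_mul_inv, le_div_iff₀ (Real.exp_pos _)]
    exact this
  intro t ht
  refine (sq_le_sq₀ (norm_nonneg _) (by positivity)).1 ?_
  rw [mul_pow, mul_pow, Real.sq_sqrt (by positivity), ← Real.exp_nat_mul]
  have he : ((2 : ℕ) : ℝ) * (-c₉ * t / (2 * lmaxP)) = -(c₉ / lmaxP) * t := by
    push_cast; field_simp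
  rw [he, div_mul_eq_mul_div, div_mul_eq_mul_div, le_div_iff₀ hmin]
  have h1 := mul_le_mul_of_nonneg_right (hup (e 0)) (Real.exp_pos (-(c₉ / lmaxP) * t)).le
  have h2 := hVle t ht
  have h3 := hlo (e t)
  simp only [hV] at h2
  linarith
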